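/- arXiv:2502.00084 — 2 statements merged into one kernel-verified Lean document; each statement's English description precedes it below -/
import Mathlib

section
/- Let μ and ν be probability measures on ℝ^d, absolutely continuous with respect to Lebesgue measure, having finite moments of order 2 + δ for some δ > 0 and finite differential entropy. Let φ_0 be a Brenier potential from μ to ν and π_0 := the pushforward of μ by x ↦ (x, ∇φ_0(x)). Then there exists a constant C > 0, depending only on μ and ν, such that for every ε > 0 and every Schrödinger pair (f_ε, g_ε) for (μ, ν, ε) with associated entropic optimal plan π_ε, one has ∫ (|x−y|²/2) dπ_ε(x,y) − ∫ (|x−y|²/2) dπ_0(x,y) ≤ C ε. -/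
open MeasureTheory Real
open scoped RealInnerProductSpace

/-- `(f, g)` is a Schrödinger pair for `(μ, ν, ε)`: both Schrödinger equations hold, with all
the integrals involved finite (integrable nonnegative integrands) and positive. -/
def IsSchrodingerPair {d : ℕ} (μ ν : Measure (EuclideanSpace ℝ (Fin d))) (ε : ℝ)
    (f g : EuclideanSpace ℝ (Fin d) → ℝ) : Prop :=
  Measurable f ∧ Measurable g ∧
  (∀ x, Integrable (fun y => Real.exp ((g y - ‖x - y‖ ^ 2 / 2) / ε)) ν ∧
    0 < ∫ y, Real.exp ((g y - ‖x - y‖ ^ 2 / 2) / ε) ∂ν ∧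
    f x = -ε * Real.log (∫ y, Real.exp ((g y - ‖x - y‖ ^ 2 / 2) / ε) ∂ν)) ∧
  (∀ y, Integrable (fun x => Real.exp ((f x - ‖y - x‖ ^ 2 / 2) / ε)) μ ∧
    0 < ∫ x, Real.exp ((f x - ‖y - x‖ ^ 2 / 2) / ε) ∂μ ∧
    g y = -ε * Real.log (∫ x, Real.exp ((f x - ‖y - x‖ ^ 2 / 2) / ε) ∂μ))

/-- The entropic potential associated to a dual function `f`: `φ = ‖·‖²/2 - f`. -/
noncomputable def entPot {d : ℕ} (f : EuclideanSpace ℝ (Fin d) → ℝ) :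
    EuclideanSpace ℝ (Fin d) → ℝ :=
  fun x => ‖x‖ ^ 2 / 2 - f x

/-- `φ` is a Brenier potential from `μ` to `ν`: convex, differentiable, and its gradient
pushes `μ` forward to `ν`. -/
def IsBrenierPotential {d : ℕ} (μ ν : Measure (EuclideanSpace ℝ (Fin d)))
    (φ : EuclideanSpace ℝ (Fin d) → ℝ) : Prop :=
  ConvexOn ℝ Set.univ φ ∧ Differentiable ℝ φ ∧
  Measure.map (fun x => gradient φ x) μ = ν

/-- The entropic optimal plan `π_ε` associated to a Schrödinger pair `(f, g)`: its density
with respect to `μ ⊗ ν` is `(x,y) ↦ exp((f x + g y - ‖x-y‖²/2)/ε)`. -/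
noncomputable def entPlan {d : ℕ} (μ ν : Measure (EuclideanSpace ℝ (Fin d))) (ε : ℝ)
    (f g : EuclideanSpace ℝ (Fin d) → ℝ) :
    Measure (EuclideanSpace ℝ (Fin d) × EuclideanSpace ℝ (Fin d)) :=
  (μ.prod ν).withDensity
    (fun p => ENNReal.ofReal (Real.exp ((f p.1 + g p.2 - ‖p.1 - p.2‖ ^ 2 / 2) / ε)))

/-- A measure `ρ ≪ Leb` has finite differential entropy: `p log p` is Lebesgue-integrable,
where `p` is the Lebesgue density of `ρ`. -/
def HasFiniteDifferentialEntropy {d : ℕ} (ρ : Measure (EuclideanSpace ℝ (Fin d))) : Prop :=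
  Integrable
    (fun x => (ρ.rnDeriv volume x).toReal * Real.log ((ρ.rnDeriv volume x).toReal))
    (volume : Measure (EuclideanSpace ℝ (Fin d)))

section Helpers
variable {d : ℕ}

theorem cvx_grad {φ : EuclideanSpace ℝ (Fin d) → ℝ} (hc : ConvexOn ℝ Set.univ φ)
    (hd : Differentiable ℝ φ) (x y : EuclideanSpace ℝ (Fin d)) :
    φ x + ⟪gradient φ x, y - x⟫ ≤ φ y := by
  have h1 : HasDerivAt (fun t : ℝ => φ (x + t • (y - x))) ⟪gradient φ x, y - x⟫ 0 := by
    have h2 : HasFDerivAt φ (fderiv ℝ φ x) (x + (0:ℝ) • (y - x)) := by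
      simpa using (hd x).hasFDerivAt
    have h3 : HasDerivAt (fun t : ℝ => x + t • (y - x)) (y - x) 0 := by
      simpa using ((hasDerivAt_id (0:ℝ)).smul_const (y - x)).const_add x
    have := h2.comp_hasDerivAt (0:ℝ) h3
    have hg : ⟪gradient φ x, y - x⟫ = fderiv ℝ φ x (y - x) := by simp [gradient]
    rw [hg]
    exact this
  have h4 : ConvexOn ℝ Set.univ (fun t : ℝ => φ (x + t • (y - x))) := by
    refine ⟨convex_univ, ?_⟩
    intro s _ t _ a b ha hb hab
    have := hc.2 (Set.mem_univ (x + s • (y - x))) (Set.mem_univ (x + t • (y - x))) ha hb hab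
    refine le_trans (le_of_eq ?_) this
    obtain rfl : b = 1 - a := by linarith
    have he : x + (a * s + (1 - a) * t) • (y - x)
        = a • (x + s • (y - x)) + (1 - a) • (x + t • (y - x)) := by module
    exact congrArg φ he
  have := h4.le_slope_of_hasDerivAt (Set.mem_univ 0) (Set.mem_univ 1) one_pos h1
  have h5 : slope (fun t : ℝ => φ (x + t • (y - x))) 0 1 = φ y - φ x := by simp [slope]
  rw [h5] at this
  linarith

theorem grad_mono {φ : EuclideanSpace ℝ (Fin d) → ℝ} (hc : ConvexOn ℝ Set.univ φ)
    (hd : Differentiable ℝ φ) (x y : EuclideanSpace ℝ (Fin d)) :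
    0 ≤ ⟪gradient φ x - gradient φ y, x - y⟫ := by
  have h1 := cvx_grad hc hd x y
  have h2 := cvx_grad hc hd y x
  have : ⟪gradient φ x, y - x⟫ = - ⟪gradient φ x, x - y⟫ := by rw [← inner_neg_right, neg_sub]
  rw [inner_sub_left]; linarith

theorem meas_grad {φ : EuclideanSpace ℝ (Fin d) → ℝ} : Measurable (fun x => gradient φ x) := by
  unfold gradient
  exact (InnerProductSpace.toDual ℝ (EuclideanSpace ℝ (Fin d))).symm.continuous.measurable.comp
    (measurable_fderiv ℝ φ)

theorem minty {φ : EuclideanSpace ℝ (Fin d) → ℝ} (hc : ConvexOn ℝ Set.univ φ)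
    (hd : Differentiable ℝ φ) : ∃ M : EuclideanSpace ℝ (Fin d) → EuclideanSpace ℝ (Fin d),
    Continuous M ∧ ∀ u, M u + gradient φ (M u) = u := by
  have hex : ∀ u, ∃ x, x + gradient φ x = u := by
    intro u
    have hcont : Continuous (fun x => φ x + ‖x - u‖ ^ 2 / 2) := by
      have := hd.continuous
      fun_prop
    have hlim : Filter.Tendsto (fun x => φ x + ‖x - u‖ ^ 2 / 2) (Filter.cocompact _) Filter.atTop := by
      have hlow : ∀ x, φ u + (‖x - u‖ * (‖x - u‖ / 2 - ‖gradient φ u‖)) ≤ φ x + ‖x - u‖ ^ 2 / 2 := by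
        intro x
        have h1 := cvx_grad hc hd u x
        have h2 := neg_le_of_abs_le (abs_real_inner_le_norm (gradient φ u) (x - u))
        nlinarith
      refine Filter.tendsto_atTop_mono hlow ?_
      have hn : Filter.Tendsto (fun x : EuclideanSpace ℝ (Fin d) => ‖x - u‖) (Filter.cocompact _) Filter.atTop := by
        refine Filter.tendsto_atTop_mono (f := fun x => ‖x‖ + (-‖u‖)) (fun x => ?_) ?_
        · have := norm_sub_norm_le x u
          linarith
        · exact Filter.tendsto_atTop_add_const_right _ _ tendsto_norm_cocompact_atTop
      refine Filter.tendsto_atTop_add_const_left _ _ ?_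
      refine hn.atTop_mul_atTop₀ ?_
      exact Filter.tendsto_atTop_add_const_right _ (-‖gradient φ u‖) (hn.atTop_div_const two_pos)
    obtain ⟨x, hx⟩ := hcont.exists_forall_le hlim
    refine ⟨x, ?_⟩
    have hmin : IsLocalMin (fun x => φ x + ‖x - u‖ ^ 2 / 2) x := Filter.Eventually.of_forall hx
    have h1 : HasGradientAt φ (gradient φ x) x := (hd x).hasGradientAt
    have h2 : HasFDerivAt (fun x => ‖x - u‖ ^ 2) (2 • (innerSL ℝ (x - u)).comp (ContinuousLinearMap.id ℝ _)) x :=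
      ((hasFDerivAt_id x).sub_const u).norm_sq
    have h3 := h1.hasFDerivAt.add (h2.const_mul (1/2:ℝ))
    have h4 : HasFDerivAt (fun x => φ x + ‖x - u‖ ^ 2 / 2) _ x := h3.congr_of_eventuallyEq
      (Filter.Eventually.of_forall (fun z => by simp; ring))
    have h5 := hmin.hasFDerivAt_eq_zero h4
    have h6 : gradient φ x + (x - u) = 0 := by
      apply ext_inner_right ℝ
      intro v
      have := congrArg (fun L => L v) h5
      simp at this
      have hg : ⟪gradient φ x, v⟫ = fderiv ℝ φ x v := by simp [gradient]
      rw [inner_add_left, inner_zero_left, hg, inner_sub_left]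
      linarith
    have : x + gradient φ x = (gradient φ x + (x - u)) + u := by abel
    rw [this, h6, zero_add]
  choose M hM using hex
  refine ⟨M, ?_, hM⟩
  have : LipschitzWith 1 M := by
    refine LipschitzWith.of_dist_le_mul (fun u v => ?_)
    rw [dist_eq_norm, dist_eq_norm, NNReal.coe_one, one_mul]
    have h1 := grad_mono hc hd (M u) (M v)
    have h2 : u - v = (M u - M v) + (gradient φ (M u) - gradient φ (M v)) := by
      nth_rewrite 1 [← hM u, ← hM v]; abel
    have h3 : ‖u - v‖ ^ 2 = ‖M u - M v‖ ^ 2 + 2 * ⟪M u - M v, gradient φ (M u) - gradient φ (M v)⟫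
      + ‖gradient φ (M u) - gradient φ (M v)‖ ^ 2 := by rw [h2]; exact norm_add_sq_real _ _
    rw [real_inner_comm] at h3
    exact le_of_sq_le_sq (by nlinarith) (norm_nonneg _)
  exact this.continuous

theorem conj_exists {φ : EuclideanSpace ℝ (Fin d) → ℝ} (hc : ConvexOn ℝ Set.univ φ)
    (hd : Differentiable ℝ φ) : ∃ ψ : EuclideanSpace ℝ (Fin d) → ℝ, ∃ B : Set (EuclideanSpace ℝ (Fin d)),
    Measurable ψ ∧ MeasurableSet B ∧ (∀ x, gradient φ x ∈ B) ∧
    (∀ x, φ x + ψ (gradient φ x) = ⟪x, gradient φ x⟫) ∧ ∀ y ∈ B, ∀ x, ⟪x, y⟫ - φ x ≤ ψ y := by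
  let s := TopologicalSpace.denseSeq (EuclideanSpace ℝ (Fin d))
  have hs : DenseRange s := TopologicalSpace.denseRange_denseSeq _
  let F : ℕ → EuclideanSpace ℝ (Fin d) → ℝ := fun n y => ⟪s n, y⟫ - φ (s n)
  have hF : ∀ n, Measurable (F n) := fun n => by
    have : Continuous (F n) := by fun_prop
    exact this.measurable
  let B := {y | BddAbove (Set.range fun n => F n y)}
  have hB : ∀ y ∈ B, ∀ x, ⟪x, y⟫ - φ x ≤ ⨆ n, F n y := by
    intro y hy x
    have hcl : IsClosed {x | ⟪x, y⟫ - φ x ≤ ⨆ n, F n y} := by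
      have := hd.continuous
      exact isClosed_le (by fun_prop) continuous_const
    exact hcl.closure_subset_iff.2 (by rintro _ ⟨n, rfl⟩; exact le_ciSup hy n) (hs x)
  have hle : ∀ x x', ⟪x', gradient φ x⟫ - φ x' ≤ ⟪x, gradient φ x⟫ - φ x := by
    intro x x'
    have := cvx_grad hc hd x x'
    rw [inner_sub_right, real_inner_comm, real_inner_comm x] at this
    linarith
  have hg : ∀ x, gradient φ x ∈ B := by
    intro x
    exact ⟨_, by rintro _ ⟨n, rfl⟩; exact hle x (s n)⟩
  refine ⟨fun y => ⨆ n, F n y, B, Measurable.iSup hF, measurableSet_bddAbove_range hF, hg, ?_, hB⟩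
  intro x
  have h1 := hB _ (hg x) x
  have h2 : ⨆ n, F n (gradient φ x) ≤ _ := ciSup_le (fun n => hle x (s n))
  show _ + (⨆ n, F n (gradient φ x)) = _
  linarith



theorem map_int {α β : Type*} [MeasurableSpace α] [MeasurableSpace β] {μ : Measure α} {ν : Measure β}
    {T : α → β} (hT : Measurable T) (h : Measure.map T μ = ν) {f : β → ℝ} (hf : Integrable f ν) :
    Integrable (fun x => f (T x)) μ ∧ ∫ x, f (T x) ∂μ = ∫ y, f y ∂ν := by
  subst h
  exact ⟨(integrable_map_measure hf.1 hT.aemeasurable).1 hf, (integral_map hT.aemeasurable hf.1).symm⟩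

theorem sq_mom {δ : ℝ} (hδ : 0 < δ) {μ : Measure (EuclideanSpace ℝ (Fin d))} [IsProbabilityMeasure μ]
    (h : Integrable (fun x => ‖x‖ ^ (2 + δ)) μ) : Integrable (fun x => ‖x‖ ^ 2) μ := by
  refine Integrable.mono' (h.add (integrable_const 1)) (by fun_prop) (Filter.Eventually.of_forall fun x => ?_)
  have h0 := norm_nonneg x
  simp only [Pi.add_apply, norm_pow, norm_norm]
  rcases le_total ‖x‖ 1 with h1 | h1
  · have : 0 ≤ ‖x‖ ^ (2 + δ) := by positivity
    nlinarith
  · have := Real.rpow_le_rpow_of_exponent_le h1 (show (2:ℝ) ≤ 2 + δ by linarith)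
    rw [Real.rpow_two] at this
    linarith

theorem cost_le (x y : EuclideanSpace ℝ (Fin d)) : ‖x - y‖ ^ 2 / 2 ≤ ‖x‖ ^ 2 + ‖y‖ ^ 2 := by
  have := norm_sub_le x y
  nlinarith [norm_nonneg (x - y), sq_nonneg (‖x‖ - ‖y‖), norm_nonneg x, norm_nonneg y]

theorem pot_upper {ν : Measure (EuclideanSpace ℝ (Fin d))} [IsProbabilityMeasure ν] {ε : ℝ} (hε : 0 < ε)
    {f g : EuclideanSpace ℝ (Fin d) → ℝ} (hg : Measurable g)
    (h : ∀ x, Integrable (fun y => Real.exp ((g y - ‖x - y‖ ^ 2 / 2) / ε)) ν ∧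
    0 < ∫ y, Real.exp ((g y - ‖x - y‖ ^ 2 / 2) / ε) ∂ν ∧
    f x = -ε * Real.log (∫ y, Real.exp ((g y - ‖x - y‖ ^ 2 / 2) / ε) ∂ν)) :
    ∃ a, 0 ≤ a ∧ ∀ x, f x ≤ a + ‖x‖ ^ 2 := by
  let S : ℕ → Set (EuclideanSpace ℝ (Fin d)) := fun n => {y | ‖y‖ ≤ n ∧ -(n:ℝ) ≤ g y}
  have hS : ∀ n, MeasurableSet (S n) := fun n =>
    (measurableSet_le measurable_norm measurable_const).inter (measurableSet_le measurable_const hg)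
  have hU : (⋃ n, S n) = Set.univ := by
    ext y
    simp only [Set.mem_iUnion, Set.mem_univ, iff_true]
    obtain ⟨n, hn⟩ := exists_nat_ge (max ‖y‖ (-g y))
    exact ⟨n, (le_max_left _ _).trans hn, by linarith [(le_max_right ‖y‖ (-g y)).trans hn]⟩
  obtain ⟨n, hn⟩ := exists_measure_pos_of_not_measure_iUnion_null (μ := ν) (s := S) (by rw [hU]; simp)
  have hm : 0 < ν.real (S n) := by
    rw [measureReal_def]; exact ENNReal.toReal_pos hn.ne' (measure_ne_top _ _)
  refine ⟨|-ε * Real.log (ν.real (S n)) + n + n ^ 2|, abs_nonneg _, fun x => ?_⟩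
  obtain ⟨h1, h2, h3⟩ := h x
  have h4 : ν.real (S n) * Real.exp ((-n - (‖x‖ ^ 2 + n ^ 2)) / ε) ≤
      ∫ y, Real.exp ((g y - ‖x - y‖ ^ 2 / 2) / ε) ∂ν := by
    have : ∫ y, (S n).indicator (fun _ => Real.exp ((-n - (‖x‖ ^ 2 + n ^ 2)) / ε)) y ∂ν =
      ν.real (S n) * Real.exp ((-n - (‖x‖ ^ 2 + n ^ 2)) / ε) := by
      rw [integral_indicator (hS n), setIntegral_const, smul_eq_mul]
    rw [← this]
    refine integral_mono ((integrable_const _).indicator (hS n)) h1 (fun y => ?_)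
    by_cases hy : y ∈ S n
    · rw [Set.indicator_of_mem hy]
      apply Real.exp_le_exp.2
      have := cost_le x y
      have h5 : ‖y‖ ^ 2 ≤ n ^ 2 := pow_le_pow_left₀ (norm_nonneg _) hy.1 2
      have := hy.2
      gcongr <;> linarith
    · rw [Set.indicator_of_notMem hy]; positivity
  have h5 := Real.log_le_log (by positivity) h4
  rw [Real.log_mul hm.ne' (Real.exp_pos _).ne', Real.log_exp] at h5
  have h6 := mul_le_mul_of_nonneg_left h5 hε.le
  rw [mul_add, mul_div_cancel₀ _ hε.ne'] at h6
  have := le_abs_self (-ε * Real.log (ν.real (S n)) + n + n ^ 2)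
  rw [h3]
  linarith

theorem marg_one {ν : Measure (EuclideanSpace ℝ (Fin d))} {ε : ℝ} (hε : 0 < ε)
    {f g : EuclideanSpace ℝ (Fin d) → ℝ}
    (h : ∀ x, Integrable (fun y => Real.exp ((g y - ‖x - y‖ ^ 2 / 2) / ε)) ν ∧
    0 < ∫ y, Real.exp ((g y - ‖x - y‖ ^ 2 / 2) / ε) ∂ν ∧
    f x = -ε * Real.log (∫ y, Real.exp ((g y - ‖x - y‖ ^ 2 / 2) / ε) ∂ν)) (x) :
    ∫⁻ y, ENNReal.ofReal (Real.exp ((f x + g y - ‖x - y‖ ^ 2 / 2) / ε)) ∂ν = 1 := by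
  obtain ⟨h1, h2, h3⟩ := h x
  have h4 : ∀ y, Real.exp ((f x + g y - ‖x - y‖ ^ 2 / 2) / ε) =
      Real.exp (f x / ε) * Real.exp ((g y - ‖x - y‖ ^ 2 / 2) / ε) := by
    intro y; rw [← Real.exp_add]; congr 1; ring
  simp_rw [h4]
  rw [← ofReal_integral_eq_lintegral_ofReal (h1.const_mul _)
    (Filter.Eventually.of_forall fun y => by positivity), integral_const_mul, h3]
  have : -ε * Real.log (∫ y, Real.exp ((g y - ‖x - y‖ ^ 2 / 2) / ε) ∂ν) / ε
    = - Real.log (∫ y, Real.exp ((g y - ‖x - y‖ ^ 2 / 2) / ε) ∂ν) := by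
    rw [neg_mul, neg_div, mul_div_cancel_left₀ _ hε.ne']
  rw [this, Real.exp_neg, Real.exp_log h2, inv_mul_cancel₀ h2.ne', ENNReal.ofReal_one]

section
variable {μ ν : Measure (EuclideanSpace ℝ (Fin d))} [IsProbabilityMeasure μ] [IsProbabilityMeasure ν]
  {ε : ℝ} {f g : EuclideanSpace ℝ (Fin d) → ℝ}

theorem dens_meas (h : IsSchrodingerPair μ ν ε f g) : 
    Measurable (fun p : EuclideanSpace ℝ (Fin d) × EuclideanSpace ℝ (Fin d) =>
      (f p.1 + g p.2 - ‖p.1 - p.2‖ ^ 2 / 2) / ε) := by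
  have h1 := h.1
  have h2 := h.2.1
  fun_prop

theorem plan_fst (hε : 0 < ε) (h : IsSchrodingerPair μ ν ε f g) :
    Measure.map Prod.fst (entPlan μ ν ε f g) = μ := by
  have hm := (dens_meas h).exp.ennreal_ofReal
  ext s hs
  rw [Measure.map_apply measurable_fst hs, entPlan, withDensity_apply _ (measurable_fst hs),
    ← lintegral_indicator (measurable_fst hs), lintegral_prod _ (hm.indicator (measurable_fst hs)).aemeasurable]
  have : ∀ x, ∫⁻ y, (Prod.fst ⁻¹' s).indicator (fun p : EuclideanSpace ℝ (Fin d) × EuclideanSpace ℝ (Fin d) =>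
      ENNReal.ofReal (Real.exp ((f p.1 + g p.2 - ‖p.1 - p.2‖ ^ 2 / 2) / ε))) (x, y) ∂ν = s.indicator 1 x := by
    intro x
    by_cases hx : x ∈ s
    · simp only [Set.indicator, Set.mem_preimage, hx, if_true, Pi.one_apply]
      exact marg_one hε h.2.2.1 x
    · simp [Set.indicator, hx]
  simp_rw [this]
  rw [lintegral_indicator_one hs]

theorem plan_snd (hε : 0 < ε) (h : IsSchrodingerPair μ ν ε f g) :
    Measure.map Prod.snd (entPlan μ ν ε f g) = ν := by
  have hm := (dens_meas h).exp.ennreal_ofReal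
  ext s hs
  rw [Measure.map_apply measurable_snd hs, entPlan, withDensity_apply _ (measurable_snd hs),
    ← lintegral_indicator (measurable_snd hs), lintegral_prod_symm _ (hm.indicator (measurable_snd hs)).aemeasurable]
  have : ∀ y, ∫⁻ x, (Prod.snd ⁻¹' s).indicator (fun p : EuclideanSpace ℝ (Fin d) × EuclideanSpace ℝ (Fin d) =>
      ENNReal.ofReal (Real.exp ((f p.1 + g p.2 - ‖p.1 - p.2‖ ^ 2 / 2) / ε))) (x, y) ∂μ = s.indicator 1 y := by
    intro y
    by_cases hy : y ∈ s
    · simp only [Set.indicator, Set.mem_preimage, hy, if_true, Pi.one_apply]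
      rw [← marg_one hε h.2.2.2 y]
      refine lintegral_congr fun x => ?_
      rw [norm_sub_rev, add_comm]
    · simp [Set.indicator, hy]
  simp_rw [this]
  rw [lintegral_indicator_one hs]

theorem cost_int {Γ : Measure (EuclideanSpace ℝ (Fin d) × EuclideanSpace ℝ (Fin d))}
    (h1 : Measure.map Prod.fst Γ = μ) (h2 : Measure.map Prod.snd Γ = ν)
    (hμ : Integrable (fun x => ‖x‖ ^ 2) μ) (hν : Integrable (fun x => ‖x‖ ^ 2) ν) :
    Integrable (fun p => ‖p.1 - p.2‖ ^ 2 / 2) Γ := by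
  refine Integrable.mono' ((map_int measurable_fst h1 hμ).1.add (map_int measurable_snd h2 hν).1)
    (by fun_prop) (Filter.Eventually.of_forall fun p => ?_)
  rw [Real.norm_of_nonneg (by positivity)]
  exact cost_le _ _

theorem pot_int (hε : 0 < ε) (h : IsSchrodingerPair μ ν ε f g)
    (hμ : Integrable (fun x => ‖x‖ ^ 2) μ) (hν : Integrable (fun x => ‖x‖ ^ 2) ν) :
    Integrable f μ ∧ Integrable g ν := by
  obtain ⟨a, ha, hfa⟩ := pot_upper hε h.2.1 h.2.2.1
  obtain ⟨b, hb, hgb⟩ := pot_upper hε h.1 h.2.2.2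
  set Γ := entPlan μ ν ε f g with hΓ
  have h1 := plan_fst hε h
  have h2 := plan_snd hε h
  haveI : IsProbabilityMeasure Γ := ⟨by
    have := congrArg (fun m => m Set.univ) h1
    simpa [Measure.map_apply measurable_fst MeasurableSet.univ] using this⟩
  have hm := dens_meas h
  have hx := (map_int measurable_fst h1 hμ).1
  have hy := (map_int measurable_snd h2 hν).1
  have hc := cost_int h1 h2 hμ hν
  have hf := h.1
  have hg := h.2.1
  have hneg : Integrable (fun p : EuclideanSpace ℝ (Fin d) × EuclideanSpace ℝ (Fin d) =>
      max (-((f p.1 + g p.2 - ‖p.1 - p.2‖ ^ 2 / 2) / ε)) 0) Γ := by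
    refine ⟨(by fun_prop), ?_⟩
    rw [hasFiniteIntegral_iff_ofReal (Filter.Eventually.of_forall fun p => by simp)]
    rw [hΓ, entPlan, lintegral_withDensity_eq_lintegral_mul _ hm.exp.ennreal_ofReal
      (Measurable.ennreal_ofReal (by fun_prop))]
    refine lt_of_le_of_lt (lintegral_mono (g := fun _ => 1) fun p => ?_) (by simp)
    rw [Pi.mul_apply, ← ENNReal.ofReal_mul (Real.exp_pos _).le, ← ENNReal.ofReal_one]
    apply ENNReal.ofReal_le_ofReal
    generalize (f p.1 + g p.2 - ‖p.1 - p.2‖ ^ 2 / 2) / ε = t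
    have h3 := Real.add_one_le_exp (-t)
    have h4 : max (-t) 0 ≤ Real.exp (-t) := max_le (by linarith) (Real.exp_pos _).le
    calc _ ≤ Real.exp t * Real.exp (-t) := by gcongr
      _ = 1 := by rw [← Real.exp_add]; simp
  have hlow : ∀ p : EuclideanSpace ℝ (Fin d) × EuclideanSpace ℝ (Fin d),
    -(ε * max (-((f p.1 + g p.2 - ‖p.1 - p.2‖ ^ 2 / 2) / ε)) 0) ≤ f p.1 + g p.2 := by
    intro p
    have h3 := le_max_left (-((f p.1 + g p.2 - ‖p.1 - p.2‖ ^ 2 / 2) / ε)) 0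
    have h4 := mul_le_mul_of_nonneg_left h3 hε.le
    have h5 : ε * -((f p.1 + g p.2 - ‖p.1 - p.2‖ ^ 2 / 2) / ε) = -(f p.1 + g p.2 - ‖p.1 - p.2‖ ^ 2 / 2) := by
      field_simp
    rw [h5] at h4
    have : 0 ≤ ‖p.1 - p.2‖ ^ 2 / 2 := by positivity
    linarith
  have hB := (((hneg.const_mul ε).add hx).add hy).add (integrable_const (a + b))
  have hpos : ∀ p : EuclideanSpace ℝ (Fin d) × EuclideanSpace ℝ (Fin d),
    0 ≤ ε * max (-((f p.1 + g p.2 - ‖p.1 - p.2‖ ^ 2 / 2) / ε)) 0 :=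
    fun p => mul_nonneg hε.le (le_max_right _ _)
  constructor
  · rw [← h1]
    refine (integrable_map_measure hf.aestronglyMeasurable measurable_fst.aemeasurable).2 ?_
    refine hB.mono' (hf.comp measurable_fst).aestronglyMeasurable (Filter.Eventually.of_forall fun p => ?_)
    have := hlow p
    have := hpos p
    have := hfa p.1
    have := hgb p.2
    simp only [Function.comp, Pi.add_apply, Real.norm_eq_abs]
    rw [abs_le]
    constructor <;> linarith [sq_nonneg ‖p.1‖, sq_nonneg ‖p.2‖]
  · rw [← h2]
    refine (integrable_map_measure hg.aestronglyMeasurable measurable_snd.aemeasurable).2 ?_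
    refine hB.mono' (hg.comp measurable_snd).aestronglyMeasurable (Filter.Eventually.of_forall fun p => ?_)
    have := hlow p
    have := hpos p
    have := hfa p.1
    have := hgb p.2
    simp only [Function.comp, Pi.add_apply, Real.norm_eq_abs]
    rw [abs_le]
    constructor <;> linarith [sq_nonneg ‖p.1‖, sq_nonneg ‖p.2‖]
end



theorem inner_bd (x y : EuclideanSpace ℝ (Fin d)) : |⟪x, y⟫| ≤ ‖x‖ ^ 2 + ‖y‖ ^ 2 := by
  have := abs_real_inner_le_norm x y
  nlinarith [sq_nonneg (‖x‖ - ‖y‖), sq_nonneg ‖x‖, sq_nonneg ‖y‖]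

theorem subopt {μ ν : Measure (EuclideanSpace ℝ (Fin d))} [IsProbabilityMeasure μ] [IsProbabilityMeasure ν]
    (hμ : Integrable (fun x => ‖x‖ ^ 2) μ) (hν : Integrable (fun x => ‖x‖ ^ 2) ν)
    {φ : EuclideanSpace ℝ (Fin d) → ℝ} (hφ : IsBrenierPotential μ ν φ)
    {M : EuclideanSpace ℝ (Fin d) → EuclideanSpace ℝ (Fin d)} (hM : Continuous M)
    (hM' : ∀ u, M u + gradient φ (M u) = u)
    {Γ : Measure (EuclideanSpace ℝ (Fin d) × EuclideanSpace ℝ (Fin d))} 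
    (h1 : Measure.map Prod.fst Γ = μ) (h2 : Measure.map Prod.snd Γ = ν) :
    Integrable φ μ ∧ Integrable (fun p => ‖p.1 - M (p.1 + p.2)‖ ^ 2) Γ ∧
    ∫ p, ‖p.1 - M (p.1 + p.2)‖ ^ 2 ∂Γ ≤ (∫ p, ‖p.1 - p.2‖ ^ 2 / 2 ∂Γ) -
      ∫ p, ‖p.1 - p.2‖ ^ 2 / 2 ∂(Measure.map (fun x => (x, gradient φ x)) μ) := by
  obtain ⟨hc, hd, hT⟩ := hφ
  have hTm := meas_grad (φ := φ)
  obtain ⟨ψ, B, hψm, hBm, hgB, hψ, hB⟩ := conj_exists hc hd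
  have hT2 := (map_int hTm hT hν)
  have hxT : Integrable (fun x => ⟪x, gradient φ x⟫) μ := by
    refine (hμ.add hT2.1).mono' (by fun_prop) (Filter.Eventually.of_forall fun x => inner_bd _ _)
  have hlow1 : ∀ x, φ 0 - (‖gradient φ 0‖ ^ 2 + ‖x‖ ^ 2) ≤ φ x := by
    intro x
    have h3 := cvx_grad hc hd 0 x
    have h4 := (abs_le.1 (inner_bd (gradient φ 0) (x - 0))).1
    rw [sub_zero] at h3 h4
    linarith
  have hlow2 : ∀ x, - φ 0 ≤ ψ (gradient φ x) := by
    intro x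
    have := hB _ (hgB x) 0
    simpa using this
  have hφi : Integrable φ μ := by
    refine ((hxT.norm.add hμ).add (integrable_const (|φ 0| + ‖gradient φ 0‖ ^ 2))).mono'
      (hd.continuous.aestronglyMeasurable) (Filter.Eventually.of_forall fun x => ?_)
    have h3 := hlow1 x
    have h4 := hlow2 x
    have h5 := hψ x
    have h6 := abs_le.1 (le_refl |φ 0|)
    have h7 := abs_le.1 (le_refl |⟪x, gradient φ x⟫|)
    simp only [Pi.add_apply, Real.norm_eq_abs]
    rw [abs_le]
    constructor <;> linarith [sq_nonneg ‖x‖, sq_nonneg ‖gradient φ 0‖]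
  have hψT : Integrable (fun x => ψ (gradient φ x)) μ := by
    refine (hxT.sub hφi).congr (Filter.Eventually.of_forall fun x => ?_)
    have := hψ x
    simp only [Pi.sub_apply]; linarith
  have hψi : Integrable ψ ν := by
    rw [← hT]
    exact (integrable_map_measure hψm.aestronglyMeasurable hTm.aemeasurable).2 hψT
  have hsum : ∫ x, φ x ∂μ + ∫ y, ψ y ∂ν = ∫ x, ⟪x, gradient φ x⟫ ∂μ := by
    rw [← (map_int hTm hT hψi).2, ← integral_add hφi hψT]
    exact integral_congr_ae (Filter.Eventually.of_forall hψ)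
  have hBae : ∀ᵐ p ∂Γ, p.2 ∈ B := by
    have h3 : ∀ᵐ y ∂ν, y ∈ B := by
      rw [← hT]
      exact (ae_map_iff hTm.aemeasurable hBm).2 (Filter.Eventually.of_forall hgB)
    rw [← h2] at h3
    exact (ae_map_iff measurable_snd.aemeasurable hBm).1 h3
  obtain ⟨a1, a2⟩ := map_int measurable_fst h1 hφi
  obtain ⟨b1, b2⟩ := map_int measurable_snd h2 hψi
  obtain ⟨x1, x2⟩ := map_int measurable_fst h1 hμ
  obtain ⟨y1, y2⟩ := map_int measurable_snd h2 hν
  have hxy : Integrable (fun p => ⟪p.1, p.2⟫) Γ :=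
    (x1.add y1).mono' (by fun_prop) (Filter.Eventually.of_forall fun x => inner_bd _ _)
  have hkey : ∀ᵐ p ∂Γ, ‖p.1 - M (p.1 + p.2)‖ ^ 2 ≤ φ p.1 + ψ p.2 - ⟪p.1, p.2⟫ := by
    filter_upwards [hBae] with p hp
    have h3 := hB _ hp (M (p.1 + p.2))
    have h4 := cvx_grad hc hd (M (p.1 + p.2)) p.1
    have h5 := hM' (p.1 + p.2)
    set m := M (p.1 + p.2)
    have h6 : gradient φ m = (p.1 - m) + p.2 := by
      have : gradient φ m = (m + gradient φ m) - m := by abel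
      rw [this, h5]; abel
    rw [h6, inner_add_left, real_inner_self_eq_norm_sq, inner_sub_right, real_inner_comm p.1 p.2,
      real_inner_comm m p.2] at h4
    linarith
  have hR := (a1.add b1).sub hxy
  have hI : Integrable (fun p => ‖p.1 - M (p.1 + p.2)‖ ^ 2) Γ := by
    refine hR.mono' (by fun_prop) ?_
    filter_upwards [hkey] with p hp
    rw [Real.norm_of_nonneg (by positivity)]
    exact hp
  refine ⟨hφi, hI, ?_⟩
  have e1 := integral_mono_ae hI hR hkey
  rw [integral_sub' (a1.add b1) hxy, integral_add' a1 b1, a2, b2, hsum] at e1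
  have e3 : ∫ p, ‖p.1 - p.2‖ ^ 2 / 2 ∂Γ = (∫ x, ‖x‖ ^ 2 ∂μ) / 2 + (∫ x, ‖x‖ ^ 2 ∂ν) / 2 - ∫ p, ⟪p.1, p.2⟫ ∂Γ := by
    have hA := integral_sub' ((x1.div_const 2).add (y1.div_const 2)) hxy
    rw [integral_add' (x1.div_const 2) (y1.div_const 2), integral_div, integral_div, x2, y2] at hA
    rw [← hA]
    refine integral_congr_ae (Filter.Eventually.of_forall fun p => ?_)
    simp only [norm_sub_sq_real, Pi.add_apply, Pi.sub_apply]; ring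
  have e4 : ∫ p, ‖p.1 - p.2‖ ^ 2 / 2 ∂(Measure.map (fun x => (x, gradient φ x)) μ) =
      (∫ x, ‖x‖ ^ 2 ∂μ) / 2 + (∫ x, ‖x‖ ^ 2 ∂ν) / 2 - ∫ x, ⟪x, gradient φ x⟫ ∂μ := by
    have hA := integral_sub' ((hμ.div_const 2).add (hT2.1.div_const 2)) hxT
    rw [integral_add' (hμ.div_const 2) (hT2.1.div_const 2), integral_div, integral_div, hT2.2] at hA
    rw [← hA, integral_map (by fun_prop) (by fun_prop)]
    refine integral_congr_ae (Filter.Eventually.of_forall fun p => ?_)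
    simp only [norm_sub_sq_real, Pi.add_apply, Pi.sub_apply]; ring
  rw [e3, e4]
  linarith

theorem ent_lower {μ ν : Measure (EuclideanSpace ℝ (Fin d))} [IsProbabilityMeasure μ] [IsProbabilityMeasure ν]
    (hμac : μ ≪ (volume : Measure (EuclideanSpace ℝ (Fin d))))
    (hνac : ν ≪ (volume : Measure (EuclideanSpace ℝ (Fin d))))
    (hμent : HasFiniteDifferentialEntropy μ) (hνent : HasFiniteDifferentialEntropy ν)
    {t l : EuclideanSpace ℝ (Fin d) × EuclideanSpace ℝ (Fin d) → ℝ} (ht : Measurable t) (hl : Measurable l)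
    {Γ : Measure (EuclideanSpace ℝ (Fin d) × EuclideanSpace ℝ (Fin d))} 
    (hΓ : Γ = (μ.prod ν).withDensity (fun p => ENNReal.ofReal (Real.exp (t p))))
    (h1 : Measure.map Prod.fst Γ = μ) (h2 : Measure.map Prod.snd Γ = ν)
    (hti : Integrable t Γ) (hli : Integrable l Γ) {S : ℝ} (hS : 0 ≤ S)
    (hlS : ∫⁻ p, ENNReal.ofReal (Real.exp (l p)) ∂((volume : Measure (EuclideanSpace ℝ (Fin d))).prod volume)
      ≤ ENNReal.ofReal S) :
    ∫ p, l p ∂Γ + 1 - S ≤ ∫ p, t p ∂Γ + ∫ x, Real.log (μ.rnDeriv volume x).toReal ∂μ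
      + ∫ x, Real.log (ν.rnDeriv volume x).toReal ∂ν := by
  haveI : IsProbabilityMeasure Γ := ⟨by
    have := congrArg (fun m => m Set.univ) h1
    simpa [Measure.map_apply measurable_fst MeasurableSet.univ] using this⟩
  have hpm := Measure.measurable_rnDeriv μ volume
  have hqm := Measure.measurable_rnDeriv ν volume
  have hp : Integrable (fun x => Real.log (μ.rnDeriv volume x).toReal) μ :=
    (integrable_toReal_rnDeriv_mul_iff hμac).1 hμent
  have hq : Integrable (fun x => Real.log (ν.rnDeriv volume x).toReal) ν :=
    (integrable_toReal_rnDeriv_mul_iff hνac).1 hνent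
  obtain ⟨p1, p2⟩ := map_int measurable_fst h1 hp
  obtain ⟨q1, q2⟩ := map_int measurable_snd h2 hq
  have hppos : ∀ᵐ z ∂Γ, 0 < (μ.rnDeriv volume z.1).toReal := by
    have : ∀ᵐ x ∂μ, 0 < (μ.rnDeriv volume x).toReal := by
      filter_upwards [Measure.rnDeriv_pos hμac, hμac.ae_le (Measure.rnDeriv_lt_top μ volume)] with x h h'
      exact ENNReal.toReal_pos h.ne' h'.ne
    exact (show MeasurePreserving Prod.fst Γ μ from ⟨measurable_fst, h1⟩).quasiMeasurePreserving.ae this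
  have hqpos : ∀ᵐ z ∂Γ, 0 < (ν.rnDeriv volume z.2).toReal := by
    have : ∀ᵐ x ∂ν, 0 < (ν.rnDeriv volume x).toReal := by
      filter_upwards [Measure.rnDeriv_pos hνac, hνac.ae_le (Measure.rnDeriv_lt_top ν volume)] with x h h'
      exact ENNReal.toReal_pos h.ne' h'.ne
    exact (show MeasurePreserving Prod.snd Γ ν from ⟨measurable_snd, h2⟩).quasiMeasurePreserving.ae this
  let r : EuclideanSpace ℝ (Fin d) × EuclideanSpace ℝ (Fin d) → ℝ := fun z =>
    Real.exp (l z) / ((μ.rnDeriv volume z.1).toReal * (ν.rnDeriv volume z.2).toReal * Real.exp (t z))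
  have hrm : Measurable r := by fun_prop
  have hr0 : ∀ z, 0 ≤ r z := fun z => by positivity
  have hrl : ∫⁻ z, ENNReal.ofReal (r z) ∂Γ ≤ ENNReal.ofReal S := by
    refine le_trans ?_ hlS
    have hprod : μ.prod ν = ((volume : Measure (EuclideanSpace ℝ (Fin d))).prod volume).withDensity
        (fun z => μ.rnDeriv volume z.1 * ν.rnDeriv volume z.2) := by
      rw [← prod_withDensity hpm hqm, Measure.withDensity_rnDeriv_eq _ _ hμac,
        Measure.withDensity_rnDeriv_eq _ _ hνac]
    rw [hΓ, lintegral_withDensity_eq_lintegral_mul _ ht.exp.ennreal_ofReal hrm.ennreal_ofReal, hprod,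
      lintegral_withDensity_eq_lintegral_mul _ (by fun_prop)
        (ht.exp.ennreal_ofReal.mul hrm.ennreal_ofReal)]
    refine lintegral_mono fun z => ?_
    simp only [Pi.mul_apply]
    rw [← ENNReal.ofReal_mul (Real.exp_pos _).le]
    have e1 : Real.exp (t z) * r z = Real.exp (l z) / ((μ.rnDeriv volume z.1).toReal * (ν.rnDeriv volume z.2).toReal) := by
      simp only [r]
      rw [mul_div_assoc', mul_comm (Real.exp (t z)), mul_div_mul_right _ _ (Real.exp_pos _).ne']
    rw [e1]
    by_cases hz : (μ.rnDeriv volume z.1 * ν.rnDeriv volume z.2).toReal = 0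
    · rw [ENNReal.toReal_mul] at hz
      rw [hz]; simp
    · have hne : μ.rnDeriv volume z.1 * ν.rnDeriv volume z.2 ≠ ⊤ := by
        intro h; rw [h] at hz; simp at hz
      rw [← ENNReal.toReal_mul]
      nth_rewrite 1 [← ENNReal.ofReal_toReal hne]
      rw [← ENNReal.ofReal_mul ENNReal.toReal_nonneg, mul_div_cancel₀ _ hz]
  have hri : Integrable r Γ := by
    refine ⟨hrm.aestronglyMeasurable, ?_⟩
    rw [hasFiniteIntegral_iff_ofReal (Filter.Eventually.of_forall hr0)]
    exact lt_of_le_of_lt hrl ENNReal.ofReal_lt_top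
  have hrS : ∫ z, r z ∂Γ ≤ S := by
    rw [integral_eq_lintegral_of_nonneg_ae (Filter.Eventually.of_forall hr0) hrm.aestronglyMeasurable]
    exact ENNReal.toReal_le_of_le_ofReal hS hrl
  have hkey : ∀ᵐ z ∂Γ, l z + 1 - r z ≤ t z + Real.log (μ.rnDeriv volume z.1).toReal
      + Real.log (ν.rnDeriv volume z.2).toReal := by
    filter_upwards [hppos, hqpos] with z hz1 hz2
    have hr : 0 < r z := by positivity
    have h3 := Real.log_le_sub_one_of_pos hr
    simp only [r] at h3
    rw [Real.log_div (Real.exp_pos _).ne' (by positivity), Real.log_mul (by positivity) (Real.exp_pos _).ne',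
      Real.log_mul hz1.ne' hz2.ne', Real.log_exp, Real.log_exp] at h3
    simp only [r]
    linarith
  have e := integral_mono_ae ((hli.add (integrable_const 1)).sub hri) ((hti.add p1).add q1) hkey
  rw [integral_sub' (hli.add (integrable_const 1)) hri, integral_add' hli (integrable_const 1),
    integral_add' (hti.add p1) q1, integral_add' hti p1, p2, q2] at e
  simp at e
  linarith



theorem cell_lemma {X ι : Type*} [MeasurableSpace X] [MeasurableSpace ι] [Countable ι]
    [MeasurableSingletonClass ι] {μ : Measure X} [IsProbabilityMeasure μ] {Λ : Measure ι} [IsFiniteMeasure Λ]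
    {k : X → ι} (hk : Measurable k) {P Q : X → ℝ} (hP : Integrable P μ) (hQ : Integrable Q μ)
    {R : X × X → ℝ} (hRm : Measurable R) (hR0 : ∀ z, 0 ≤ R z)
    (hR : ∀ x, ∫⁻ y, ENNReal.ofReal (R (x, y)) ∂μ ≤ 1) {b : ℝ}
    (hle : ∀ x y, k x = k y → P x + Q y ≤ R (x, y) * Λ.real {k x} + b) :
    ∫ x, P x ∂μ + ∫ x, Q x ∂μ ≤ Λ.real Set.univ + b := by
  classical
  set μ' := μ.map k with hμ'
  have : IsProbabilityMeasure μ' := Measure.isProbabilityMeasure_map hk.aemeasurable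
  let h : ι × ι → ENNReal := fun p => if p.1 = p.2 then (μ' {p.1})⁻¹ else 0
  have hh : Measurable h := Measurable.of_discrete
  let D : X × X → ENNReal := fun z => h (k z.1, k z.2)
  have hD : Measurable D := by fun_prop
  set Γ := (μ.prod μ).withDensity D with hΓ
  have hW : ∀ᵐ x ∂μ, μ' {k x} ≠ 0 := by
    have h1 : ∀ᵐ j ∂μ', μ' {j} ≠ 0 := by
      rw [ae_iff_of_countable]; exact fun _ h => h
    exact ae_of_ae_map hk.aemeasurable h1
  have hpre : ∀ j, μ' {j} = μ {x | k x = j} := fun j => Measure.map_apply hk (measurableSet_singleton j)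
  have hms : ∀ j, MeasurableSet {x | k x = j} := fun j => hk (measurableSet_singleton j)
  have hD1 : ∀ x, μ' {k x} ≠ 0 → ∫⁻ y, D (x, y) ∂μ = 1 := by
    intro x hx
    have : ∀ y, D (x, y) = {y | k y = k x}.indicator (fun _ => (μ' {k x})⁻¹) y := by
      intro y
      simp only [D, h, Set.indicator, Set.mem_setOf_eq, eq_comm]
    simp_rw [this]
    rw [lintegral_indicator_const (hms _), ← hpre, ENNReal.inv_mul_cancel hx (measure_ne_top _ _)]
  have hD2 : ∀ y, μ' {k y} ≠ 0 → ∫⁻ x, D (x, y) ∂μ = 1 := by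
    intro y hy
    have : ∀ x, D (x, y) = {x | k x = k y}.indicator (fun _ => (μ' {k y})⁻¹) x := by
      intro x
      simp only [D, h, Set.indicator, Set.mem_setOf_eq]
      split_ifs with hxy
      · rw [hxy]
      · rfl
    simp_rw [this]
    rw [lintegral_indicator_const (hms _), ← hpre, ENNReal.inv_mul_cancel hy (measure_ne_top _ _)]
  have h1 : Measure.map Prod.fst Γ = μ := by
    ext s hs
    rw [Measure.map_apply measurable_fst hs, hΓ, withDensity_apply _ (measurable_fst hs),
      ← lintegral_indicator (measurable_fst hs), lintegral_prod _ (hD.indicator (measurable_fst hs)).aemeasurable,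
      ← lintegral_indicator_one hs]
    refine lintegral_congr_ae ?_
    filter_upwards [hW] with x hx
    by_cases hxs : x ∈ s
    · simp only [Set.indicator, Set.mem_preimage, hxs, if_true, Pi.one_apply]
      exact hD1 x hx
    · simp [Set.indicator, hxs]
  have h2 : Measure.map Prod.snd Γ = μ := by
    ext s hs
    rw [Measure.map_apply measurable_snd hs, hΓ, withDensity_apply _ (measurable_snd hs),
      ← lintegral_indicator (measurable_snd hs), lintegral_prod_symm _ (hD.indicator (measurable_snd hs)).aemeasurable,
      ← lintegral_indicator_one hs]
    refine lintegral_congr_ae ?_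
    filter_upwards [hW] with x hx
    by_cases hxs : x ∈ s
    · simp only [Set.indicator, Set.mem_preimage, hxs, if_true, Pi.one_apply]
      exact hD2 x hx
    · simp [Set.indicator, hxs]
  have : IsProbabilityMeasure Γ := ⟨by
    have := congrArg (fun m => m Set.univ) h1
    simpa [Measure.map_apply measurable_fst MeasurableSet.univ] using this⟩
  have hae : ∀ᵐ z ∂Γ, k z.1 = k z.2 := by
    rw [hΓ, ae_withDensity_iff hD]
    refine Filter.Eventually.of_forall fun z hz => ?_
    by_contra hne
    exact hz (by simp [D, h, hne])
  obtain ⟨p1, p2⟩ := map_int measurable_fst h1 hP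
  obtain ⟨q1, q2⟩ := map_int measurable_snd h2 hQ
  have hGm : Measurable (fun z : X × X => Λ.real {k z.1}) :=
    (Measurable.of_discrete (f := fun j : ι => Λ.real {j})).comp (hk.comp measurable_fst)
  have hGm' : Measurable (fun x : X => Λ {k x}) :=
    (Measurable.of_discrete (f := fun j : ι => Λ {j})).comp hk
  have hWm : Measurable (fun x : X => (μ' {k x})⁻¹) :=
    (Measurable.of_discrete (f := fun j : ι => (μ' {j})⁻¹)).comp hk
  have hRG : Measurable (fun z : X × X => ENNReal.ofReal (R z * Λ.real {k z.1})) := (hRm.mul hGm).ennreal_ofReal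
  have hl : ∫⁻ z, ENNReal.ofReal (R z * Λ.real {k z.1}) ∂Γ ≤ Λ Set.univ := by
    rw [hΓ, lintegral_withDensity_eq_lintegral_mul _ hD hRG,
      lintegral_prod _ (hD.mul hRG).aemeasurable]
    calc _ ≤ ∫⁻ x, (μ' {k x})⁻¹ * Λ {k x} ∂μ := by
          refine lintegral_mono fun x => ?_
          calc _ ≤ ∫⁻ y, ((μ' {k x})⁻¹ * Λ {k x}) * ENNReal.ofReal (R (x, y)) ∂μ := by
                refine lintegral_mono fun y => ?_
                simp only [Pi.mul_apply]
                rw [ENNReal.ofReal_mul (hR0 _), ofReal_measureReal, mul_assoc, mul_comm (ENNReal.ofReal _)]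
                gcongr
                simp only [D, h]
                split_ifs <;> simp
            _ = ((μ' {k x})⁻¹ * Λ {k x}) * ∫⁻ y, ENNReal.ofReal (R (x, y)) ∂μ :=
                lintegral_const_mul _ (hRm.comp measurable_prodMk_left).ennreal_ofReal
            _ ≤ _ := by
                nth_rewrite 2 [← mul_one ((μ' {k x})⁻¹ * Λ {k x})]
                gcongr
                exact hR x
      _ = ∫⁻ j, (μ' {j})⁻¹ * Λ {j} ∂μ' := by
          rw [hμ', lintegral_map Measurable.of_discrete hk]
      _ = ∑' j, (μ' {j})⁻¹ * Λ {j} * μ' {j} := lintegral_countable' _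
      _ ≤ ∑' j, 1 * Λ {j} := by
          refine ENNReal.tsum_le_tsum fun j => ?_
          rw [mul_right_comm]
          gcongr
          exact ENNReal.inv_mul_le_one _
      _ = ∫⁻ j, 1 ∂Λ := (lintegral_countable' _).symm
      _ = _ := by simp
  have hRi : Integrable (fun z : X × X => R z * Λ.real {k z.1}) Γ := by
    refine ⟨(hRm.mul hGm).aestronglyMeasurable, ?_⟩
    rw [hasFiniteIntegral_iff_ofReal (Filter.Eventually.of_forall fun z => mul_nonneg (hR0 z) measureReal_nonneg)]
    exact lt_of_le_of_lt hl (measure_lt_top _ _)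
  have hRle : ∫ z, R z * Λ.real {k z.1} ∂Γ ≤ Λ.real Set.univ := by
    rw [integral_eq_lintegral_of_nonneg_ae (Filter.Eventually.of_forall fun z => mul_nonneg (hR0 z) measureReal_nonneg)
      (hRm.mul hGm).aestronglyMeasurable]
    exact ENNReal.toReal_mono (measure_ne_top _ _) hl
  have hk2 : ∀ᵐ z ∂Γ, P z.1 + Q z.2 ≤ R z * Λ.real {k z.1} + b := by
    filter_upwards [hae] with z hz using hle z.1 z.2 hz
  have e := integral_mono_ae (p1.add q1) (hRi.add (integrable_const b)) hk2
  rw [integral_add' p1 q1, integral_add' hRi (integrable_const b), p2, q2] at e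
  simp at e
  simp only [Measure.real] at *
  linarith

theorem cell_diam {η : ℝ} (hη : 0 < η) {z w : EuclideanSpace ℝ (Fin d)}
    (h : (fun i => ⌊z i / η⌋) = fun i => ⌊w i / η⌋) : ‖z - w‖ ^ 2 ≤ d * η ^ 2 := by
  rw [EuclideanSpace.norm_sq_eq]
  have : ∀ i ∈ Finset.univ, ‖(z - w) i‖ ^ 2 ≤ η ^ 2 := by
    intro i _
    have h1 := Int.abs_sub_lt_one_of_floor_eq_floor (congrFun h i)
    rw [← sub_div, abs_div, abs_of_pos hη, div_lt_one hη] at h1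
    simp only [PiLp.sub_apply, Real.norm_eq_abs]
    exact pow_le_pow_left₀ (abs_nonneg _) h1.le 2
  refine (Finset.sum_le_sum this).trans ?_
  simp

theorem cell_vol {η : ℝ} (hη : 0 < η) (k : Fin d → ℤ) :
    (volume : Measure (EuclideanSpace ℝ (Fin d))) {z | (fun i => ⌊z i / η⌋) = k} = ENNReal.ofReal (η ^ d) := by
  have h1 : {z : EuclideanSpace ℝ (Fin d) | (fun i => ⌊z i / η⌋) = k} = WithLp.ofLp ⁻¹'
      (Set.univ.pi fun i => Set.Ico (k i * η) ((k i + 1) * η)) := by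
    ext z
    simp only [Set.mem_setOf_eq, funext_iff, Set.mem_preimage, Set.mem_pi, Set.mem_univ, true_implies,
      Int.floor_eq_iff, Set.mem_Ico, le_div_iff₀ hη, div_lt_iff₀ hη]
  rw [h1, (PiLp.volume_preserving_ofLp (Fin d)).measure_preimage
    (MeasurableSet.univ_pi fun i => measurableSet_Ico).nullMeasurableSet, Real.volume_pi_Ico]
  have : ∀ i : Fin d, (k i + 1) * η - k i * η = η := fun i => by ring
  simp [this, ENNReal.ofReal_pow hη.le]

theorem cell_meas {η : ℝ} : Measurable (fun z : EuclideanSpace ℝ (Fin d) => fun i => ⌊z i / η⌋) := by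
  refine measurable_pi_lambda _ fun i => ?_
  exact Int.measurable_floor.comp (by fun_prop)

theorem gauss_int {b : ℝ} (hb : 0 < b) :
    Integrable (fun v : EuclideanSpace ℝ (Fin d) => Real.exp (-b * ‖v‖ ^ 2)) := by
  by_contra h
  have h1 := GaussianFourier.integral_rexp_neg_mul_sq_norm (V := EuclideanSpace ℝ (Fin d)) hb
  rw [integral_undef h] at h1
  have : 0 < (π / b) ^ ((Module.finrank ℝ (EuclideanSpace ℝ (Fin d)) : ℝ) / 2) :=
    Real.rpow_pos_of_pos (by positivity) _
  linarith

/-- Gaussian reference measure, discretised. -/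
theorem gauss_cells {η : ℝ} (hη : 0 < η) : ∃ Λ : Measure (Fin d → ℤ), IsFiniteMeasure Λ ∧
    Λ.real Set.univ = π ^ ((d:ℝ) / 2) ∧ ∀ z : EuclideanSpace ℝ (Fin d),
    0 < Λ.real {fun i => ⌊z i / η⌋} ∧
    - Real.log (Λ.real {fun i => ⌊z i / η⌋}) ≤ - d * Real.log η + 2 * ‖z‖ ^ 2 + 2 * d * η ^ 2 := by
  let k := fun z : EuclideanSpace ℝ (Fin d) => fun i => ⌊z i / η⌋
  have hk : Measurable k := cell_meas
  have hgm : Measurable (fun v : EuclideanSpace ℝ (Fin d) => ENNReal.ofReal (Real.exp (-1 * ‖v‖ ^ 2))) := by fun_prop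
  have hgi := gauss_int (d := d) one_pos
  let L := (volume : Measure (EuclideanSpace ℝ (Fin d))).withDensity
    (fun v => ENNReal.ofReal (Real.exp (-1 * ‖v‖ ^ 2)))
  have hL : L Set.univ = ENNReal.ofReal (π ^ ((d:ℝ) / 2)) := by
    have h1 := GaussianFourier.integral_rexp_neg_mul_sq_norm (V := EuclideanSpace ℝ (Fin d)) one_pos
    simp only [L, withDensity_apply _ MeasurableSet.univ, Measure.restrict_univ]
    rw [← ofReal_integral_eq_lintegral_ofReal hgi (Filter.Eventually.of_forall fun v => by positivity), h1]
    simp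
  have hLu : (L.map k) Set.univ = ENNReal.ofReal (π ^ ((d:ℝ) / 2)) := by
    rw [Measure.map_apply hk MeasurableSet.univ, Set.preimage_univ, hL]
  have hfin : IsFiniteMeasure (L.map k) := ⟨by rw [hLu]; exact ENNReal.ofReal_lt_top⟩
  refine ⟨L.map k, hfin, ?_, fun z => ?_⟩
  · rw [measureReal_def, hLu, ENNReal.toReal_ofReal (by positivity)]
  · have hms : MeasurableSet {w | k w = k z} := hk (measurableSet_singleton _)
    have h1 : ENNReal.ofReal (Real.exp (-(2 * ‖z‖ ^ 2 + 2 * d * η ^ 2)) * η ^ d) ≤ L.map k {k z} := by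
      rw [Measure.map_apply hk (measurableSet_singleton _)]
      change _ ≤ L {w | k w = k z}
      rw [withDensity_apply _ hms, ENNReal.ofReal_mul (Real.exp_pos _).le, ← cell_vol hη (k z)]
      rw [← setLIntegral_const]
      refine setLIntegral_mono hgm fun w hw => ?_
      apply ENNReal.ofReal_le_ofReal
      apply Real.exp_le_exp.2
      have h2 := cell_diam hη (show k w = k z from hw)
      have h3 : ‖w‖ ≤ ‖w - z‖ + ‖z‖ := by simpa using norm_add_le (w - z) z
      nlinarith [sq_nonneg (‖w - z‖ - ‖z‖), norm_nonneg w, norm_nonneg z, norm_nonneg (w - z)]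
    have h2 : Real.exp (-(2 * ‖z‖ ^ 2 + 2 * d * η ^ 2)) * η ^ d ≤ (L.map k).real {k z} :=
      (ENNReal.ofReal_le_iff_le_toReal (measure_ne_top _ _)).1 h1
    have h3 : 0 < Real.exp (-(2 * ‖z‖ ^ 2 + 2 * d * η ^ 2)) * η ^ d := by positivity
    refine ⟨h3.trans_le h2, ?_⟩
    have h4 := Real.log_le_log h3 h2
    rw [Real.log_mul (Real.exp_pos _).ne' (by positivity), Real.log_exp, Real.log_pow] at h4
    change - Real.log ((L.map k).real {k z}) ≤ _
    linarith



theorem upper_bound {μ ν : Measure (EuclideanSpace ℝ (Fin d))} [IsProbabilityMeasure μ] [IsProbabilityMeasure ν]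
    (hμ : Integrable (fun x => ‖x‖ ^ 2) μ) (hν : Integrable (fun x => ‖x‖ ^ 2) ν)
    {φ : EuclideanSpace ℝ (Fin d) → ℝ} (hφ : IsBrenierPotential μ ν φ) (hφi : Integrable φ μ)
    {ε : ℝ} (hε : 0 < ε) (hε1 : ε ≤ 1) {f g : EuclideanSpace ℝ (Fin d) → ℝ}
    (h : IsSchrodingerPair μ ν ε f g) :
    ∫ x, f x ∂μ + ∫ y, g y ∂ν ≤ 
      ∫ p, ‖p.1 - p.2‖ ^ 2 / 2 ∂(Measure.map (fun x => (x, gradient φ x)) μ) +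
      ε * (-(d / 2) * Real.log ε + 2 * ∫ x, ‖x + gradient φ x‖ ^ 2 ∂μ + 2 * d + π ^ ((d:ℝ) / 2) - 1 + d / 4) := by
  obtain ⟨hc, hd, hT⟩ := hφ
  have hTm := meas_grad (φ := φ)
  obtain ⟨hf, hg⟩ := pot_int hε h hμ hν
  have hfm := h.1
  have hgm := h.2.1
  have hT2 := (map_int hTm hT hν)
  have hgT := (map_int hTm hT hg)
  have hxT : Integrable (fun x => ⟪x, gradient φ x⟫) μ :=
    (hμ.add hT2.1).mono' (by fun_prop) (Filter.Eventually.of_forall fun x => inner_bd _ _)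
  have huT : Integrable (fun x => ‖x + gradient φ x‖ ^ 2) μ := by
    refine ((hμ.add hT2.1).const_mul 2).mono' (by fun_prop) (Filter.Eventually.of_forall fun x => ?_)
    rw [Real.norm_of_nonneg (by positivity)]
    have := norm_add_le x (gradient φ x)
    simp only [Pi.add_apply]
    nlinarith [norm_nonneg (x + gradient φ x), sq_nonneg (‖x‖ - ‖gradient φ x‖), norm_nonneg x,
      norm_nonneg (gradient φ x)]
  set η := Real.sqrt ε with hη
  have hη0 : 0 < η := Real.sqrt_pos.2 hε
  have hη2 : η ^ 2 = ε := Real.sq_sqrt hε.le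
  have hlog : Real.log η = Real.log ε / 2 := Real.log_sqrt hε.le
  obtain ⟨Λ, hΛ, hΛu, hΛl⟩ := gauss_cells (d := d) hη0
  let k : EuclideanSpace ℝ (Fin d) → (Fin d → ℤ) := fun x i => ⌊(x + gradient φ x) i / η⌋
  have hk : Measurable k := cell_meas.comp (measurable_id.add hTm)
  let P : EuclideanSpace ℝ (Fin d) → ℝ := fun x =>
    (f x + φ x - ‖x‖ ^ 2 / 2) / ε - (2 * ‖x + gradient φ x‖ ^ 2) + (d * Real.log η - 2 * d * η ^ 2 + 1)
  let Q : EuclideanSpace ℝ (Fin d) → ℝ := fun y =>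
    (g (gradient φ y) - ‖gradient φ y‖ ^ 2 / 2 - φ y + ⟪y, gradient φ y⟫) / ε
  let R : EuclideanSpace ℝ (Fin d) × EuclideanSpace ℝ (Fin d) → ℝ := fun z =>
    Real.exp ((f z.1 + g (gradient φ z.2) - ‖z.1 - gradient φ z.2‖ ^ 2 / 2) / ε)
  have hP1 := (hf.add hφi).sub (hμ.div_const 2)
  have hP2 := (hP1.div_const ε).sub (huT.const_mul 2)
  have hP : Integrable P μ := hP2.add (integrable_const _)
  have hQ1 := (hgT.1.sub (hT2.1.div_const 2)).sub hφi
  have hQ : Integrable Q μ := (hQ1.add hxT).div_const ε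
  have hRm : Measurable R := by
    have : Measurable (fun z : EuclideanSpace ℝ (Fin d) × EuclideanSpace ℝ (Fin d) => g (gradient φ z.2)) :=
      hgm.comp (hTm.comp measurable_snd)
    fun_prop
  have hR : ∀ x, ∫⁻ y, ENNReal.ofReal (R (x, y)) ∂μ ≤ 1 := by
    intro x
    have h1 := marg_one hε h.2.2.1 x
    have h2 : Measurable (fun y => ENNReal.ofReal (Real.exp ((f x + g y - ‖x - y‖ ^ 2 / 2) / ε))) := by fun_prop
    rw [← hT, lintegral_map h2 hTm] at h1
    exact h1.le
  have hle : ∀ x y, k x = k y → P x + Q y ≤ R (x, y) * Λ.real {k x} + d / 4 := by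
    intro x y hxy
    obtain ⟨hG0, hG⟩ := hΛl (x + gradient φ x)
    change 0 < Λ.real {k x} at hG0
    change -Real.log (Λ.real {k x}) ≤ _ at hG
    have h1 := cell_diam hη0 hxy
    have h2 := cvx_grad hc hd x y
    have h3 : 4 * ⟪x - y, gradient φ x - gradient φ y⟫ ≤ d * η ^ 2 := by
      refine le_trans ?_ h1
      have e : (x + gradient φ x) - (y + gradient φ y) = (x - y) + (gradient φ x - gradient φ y) := by abel
      rw [e, norm_add_sq_real]
      have := norm_sub_sq_real (x - y) (gradient φ x - gradient φ y)
      nlinarith [sq_nonneg ‖x - y - (gradient φ x - gradient φ y)‖]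
    have h4 : φ x - φ y - ⟪x - y, gradient φ y⟫ ≤ d * ε / 4 := by
      rw [inner_sub_right (x - y), hη2] at h3
      have : ⟪gradient φ x, y - x⟫ = - ⟪x - y, gradient φ x⟫ := by
        rw [← inner_neg_left, neg_sub, real_inner_comm]
      linarith
    have h5 : (φ x - φ y - ⟪x - y, gradient φ y⟫) / ε ≤ d / 4 := by
      rw [div_le_iff₀ hε]; linarith
    set τ := (f x + g (gradient φ y) - ‖x - gradient φ y‖ ^ 2 / 2) / ε with hτ
    have h6 := Real.add_one_le_exp (τ + Real.log (Λ.real {k x}))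
    rw [Real.exp_add, Real.exp_log hG0] at h6
    have h7 : P x + Q y = τ + (φ x - φ y - ⟪x - y, gradient φ y⟫) / ε
      - (2 * ‖x + gradient φ x‖ ^ 2) + (d * Real.log η - 2 * d * η ^ 2 + 1) := by
      simp only [P, Q, hτ, norm_sub_sq_real, inner_sub_left]
      ring
    rw [h7]
    change _ ≤ Real.exp τ * Λ.real {k x} + d / 4
    linarith
  have key := cell_lemma hk hP hQ hRm (fun z => (Real.exp_pos _).le) hR hle
  have eP : ∫ x, P x ∂μ = (∫ x, f x ∂μ + ∫ x, φ x ∂μ - (∫ x, ‖x‖ ^ 2 ∂μ) / 2) / ε -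
      2 * ∫ x, ‖x + gradient φ x‖ ^ 2 ∂μ + (d * Real.log η - 2 * d * η ^ 2 + 1) := by
    have hA := integral_add' hP2 (integrable_const (d * Real.log η - 2 * d * η ^ 2 + 1))
    rw [integral_sub' (hP1.div_const ε) (huT.const_mul 2), integral_div, integral_sub' (hf.add hφi) (hμ.div_const 2),
      integral_add' hf hφi, integral_div, integral_const_mul] at hA
    simp only [integral_const, probReal_univ, one_smul] at hA
    exact hA
  have eQ : ∫ x, Q x ∂μ = (∫ x, g x ∂ν - (∫ x, ‖x‖ ^ 2 ∂ν) / 2 - ∫ x, φ x ∂μ + ∫ x, ⟪x, gradient φ x⟫ ∂μ) / ε := by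
    have hA := integral_add' hQ1 hxT
    rw [integral_sub' (hgT.1.sub (hT2.1.div_const 2)) hφi,
      integral_sub' hgT.1 (hT2.1.div_const 2), integral_div, hgT.2, hT2.2] at hA
    simp only [Q]
    rw [integral_div, ← hA]
    rfl
  have e4 : ∫ p, ‖p.1 - p.2‖ ^ 2 / 2 ∂(Measure.map (fun x => (x, gradient φ x)) μ) =
      (∫ x, ‖x‖ ^ 2 ∂μ) / 2 + (∫ x, ‖x‖ ^ 2 ∂ν) / 2 - ∫ x, ⟪x, gradient φ x⟫ ∂μ := by
    have hA := integral_sub' ((hμ.div_const 2).add (hT2.1.div_const 2)) hxT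
    rw [integral_add' (hμ.div_const 2) (hT2.1.div_const 2), integral_div, integral_div, hT2.2] at hA
    rw [← hA, integral_map (by fun_prop) (by fun_prop)]
    refine integral_congr_ae (Filter.Eventually.of_forall fun p => ?_)
    simp only [norm_sub_sq_real, Pi.add_apply, Pi.sub_apply]; ring
  rw [eP, eQ, hΛu, hlog, hη2] at key
  have key2 := mul_le_mul_of_nonneg_left key hε.le
  rw [e4]
  generalize ∫ x, ‖x + gradient φ x‖ ^ 2 ∂μ = U at *
  generalize ∫ x, ⟪x, gradient φ x⟫ ∂μ = I at *
  generalize ∫ x, f x ∂μ = F at *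
  generalize ∫ x, g x ∂ν = G at *
  generalize ∫ x, φ x ∂μ = Φ at *
  generalize ∫ x, ‖x‖ ^ 2 ∂μ = m1 at *
  generalize ∫ x, ‖x‖ ^ 2 ∂ν = m2 at *
  generalize π ^ ((d:ℝ) / 2) = A at *
  have e5 : ε * ((F + Φ - m1 / 2) / ε - 2 * U + (d * (Real.log ε / 2) - 2 * d * ε + 1) + (G - m2 / 2 - Φ + I) / ε)
    = F + G - m1 / 2 - m2 / 2 + I + ε * (-2 * U + (d * (Real.log ε / 2) - 2 * d * ε + 1)) := by
    field_simp; ring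
  rw [e5] at key2
  have e6 : ε * (2 * d * ε) ≤ ε * (2 * d) := by
    have : (0:ℝ) ≤ d := Nat.cast_nonneg d
    apply mul_le_mul_of_nonneg_left _ hε.le
    nlinarith
  nlinarith

theorem gauss_test {M : EuclideanSpace ℝ (Fin d) → EuclideanSpace ℝ (Fin d)} (hM : Continuous M)
    {ε : ℝ} (hε : 0 < ε) :
    ∫⁻ p, ENNReal.ofReal (Real.exp (-(d / 2) * Real.log (2 * π * ε) - ‖p.1 + p.2‖ ^ 2
      - ‖p.1 - M (p.1 + p.2)‖ ^ 2 / (2 * ε))) ∂((volume : Measure (EuclideanSpace ℝ (Fin d))).prod volume)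
      ≤ ENNReal.ofReal (π ^ ((d:ℝ) / 2)) := by
  let F : EuclideanSpace ℝ (Fin d) × EuclideanSpace ℝ (Fin d) → ENNReal := fun q =>
    ENNReal.ofReal (Real.exp (-(d / 2) * Real.log (2 * π * ε) - ‖q.2‖ ^ 2 - ‖q.1 - M q.2‖ ^ 2 / (2 * ε)))
  have hF : Measurable F := by
    have := hM.measurable
    fun_prop
  have h1 := (measurePreserving_prod_add (volume : Measure (EuclideanSpace ℝ (Fin d))) volume).lintegral_comp hF
  have hπ := Real.pi_pos
  have hb : 0 < 1 / (2 * ε) := by positivity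
  have hK := GaussianFourier.integral_rexp_neg_mul_sq_norm (V := EuclideanSpace ℝ (Fin d)) hb
  have hK' : (π / (1 / (2 * ε))) ^ ((Module.finrank ℝ (EuclideanSpace ℝ (Fin d)) : ℝ) / 2) =
      Real.exp ((d / 2) * Real.log (2 * π * ε)) := by
    rw [Real.rpow_def_of_pos (by positivity)]
    have : π / (1 / (2 * ε)) = 2 * π * ε := by field_simp
    rw [this, mul_comm]; simp
  rw [hK'] at hK
  have hA := GaussianFourier.integral_rexp_neg_mul_sq_norm (V := EuclideanSpace ℝ (Fin d)) one_pos
  calc _ = ∫⁻ z, F z ∂((volume : Measure (EuclideanSpace ℝ (Fin d))).prod volume) := h1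
    _ = ∫⁻ u, ∫⁻ x, F (x, u) := lintegral_prod_symm _ hF.aemeasurable
    _ = ∫⁻ u : EuclideanSpace ℝ (Fin d), ENNReal.ofReal (Real.exp (-1 * ‖u‖ ^ 2)) := by
        refine lintegral_congr fun u => ?_
        have e : ∀ x, F (x, u) = ENNReal.ofReal (Real.exp (-1 * ‖u‖ ^ 2)) *
            (ENNReal.ofReal (Real.exp (-((d / 2) * Real.log (2 * π * ε)))) *
            ENNReal.ofReal (Real.exp (-(1 / (2 * ε)) * ‖x - M u‖ ^ 2))) := by
          intro x
          rw [← ENNReal.ofReal_mul (Real.exp_pos _).le, ← ENNReal.ofReal_mul (Real.exp_pos _).le,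
            ← Real.exp_add, ← Real.exp_add]
          simp only [F]
          congr 2
          ring
        simp_rw [e]
        rw [lintegral_const_mul _ (by fun_prop), lintegral_const_mul _ (by fun_prop),
          lintegral_sub_right_eq_self (fun x => ENNReal.ofReal (Real.exp (-(1 / (2 * ε)) * ‖x‖ ^ 2))) (M u),
          ← ofReal_integral_eq_lintegral_ofReal (gauss_int hb) (Filter.Eventually.of_forall fun v => by positivity),
          hK, ← ENNReal.ofReal_mul (Real.exp_pos _).le, ← Real.exp_add]
        simp
    _ ≤ _ := by
        rw [← ofReal_integral_eq_lintegral_ofReal (gauss_int one_pos) (Filter.Eventually.of_forall fun v => by positivity), hA]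
        simp

end Helpers

/-- under moment and entropy assumptions, the transport cost of the entropic
plan exceeds the optimal cost by at most `C ε`. -/
theorem cost_difference_le_linear {d : ℕ} (δ : ℝ) (hδ : 0 < δ)
    (μ ν : Measure (EuclideanSpace ℝ (Fin d)))
    [IsProbabilityMeasure μ] [IsProbabilityMeasure ν]
    (hμac : μ ≪ (volume : Measure (EuclideanSpace ℝ (Fin d))))
    (hνac : ν ≪ (volume : Measure (EuclideanSpace ℝ (Fin d))))
    (hμmom : Integrable (fun x => ‖x‖ ^ (2 + δ)) μ)
    (hνmom : Integrable (fun y => ‖y‖ ^ (2 + δ)) ν)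
    (hμent : HasFiniteDifferentialEntropy μ) (hνent : HasFiniteDifferentialEntropy ν)
    (φ₀ : EuclideanSpace ℝ (Fin d) → ℝ) (hφ₀ : IsBrenierPotential μ ν φ₀) :
    ∃ C > (0 : ℝ), ∀ ε > (0 : ℝ), ∀ f g : EuclideanSpace ℝ (Fin d) → ℝ,
      IsSchrodingerPair μ ν ε f g →
      (∫ p, ‖p.1 - p.2‖ ^ 2 / 2 ∂(entPlan μ ν ε f g)) -
        (∫ p, ‖p.1 - p.2‖ ^ 2 / 2 ∂(Measure.map (fun x => (x, gradient φ₀ x)) μ)) ≤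
          C * ε := by
  have hμ := sq_mom hδ hμmom
  have hν := sq_mom hδ hνmom
  obtain ⟨M, hM, hM'⟩ := minty hφ₀.1 hφ₀.2.1
  set m := ∫ x, ‖x‖ ^ 2 ∂μ + ∫ x, ‖x‖ ^ 2 ∂ν with hm
  have hm0 : 0 ≤ m := add_nonneg (integral_nonneg fun x => by positivity) (integral_nonneg fun x => by positivity)
  set H := ∫ x, Real.log (μ.rnDeriv volume x).toReal ∂μ + ∫ x, Real.log (ν.rnDeriv volume x).toReal ∂ν with hH
  set A := π ^ ((d:ℝ) / 2) with hA
  have hA0 : 0 ≤ A := by positivity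
  set U := ∫ x, ‖x + gradient φ₀ x‖ ^ 2 ∂μ with hU
  set C0 := 2 * U + 2 * d + A - 1 + d / 4 + (d / 2) * Real.log (2 * π) + 2 * m - 1 + A + H with hC0
  refine ⟨2 * |C0| + m + 1, by positivity, fun ε hε f g h => ?_⟩
  have h1 := plan_fst hε h
  have h2 := plan_snd hε h
  set Γ := entPlan μ ν ε f g with hΓ
  have : IsProbabilityMeasure Γ := ⟨by
    have := congrArg (fun m => m Set.univ) h1
    simpa [Measure.map_apply measurable_fst MeasurableSet.univ] using this⟩
  obtain ⟨x1, x2⟩ := map_int measurable_fst h1 hμ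
  obtain ⟨y1, y2⟩ := map_int measurable_snd h2 hν
  have hc := cost_int h1 h2 hμ hν
  obtain ⟨hφi, hDi, hD⟩ := subopt hμ hν hφ₀ hM hM' h1 h2
  set c0 := ∫ p, ‖p.1 - p.2‖ ^ 2 / 2 ∂(Measure.map (fun x => (x, gradient φ₀ x)) μ) with hc0
  have hc00 : 0 ≤ c0 := integral_nonneg fun x => by positivity
  rcases lt_or_ge 1 ε with hε1 | hε1
  · have e1 : ∫ p, ‖p.1 - p.2‖ ^ 2 / 2 ∂Γ ≤ m := by
      have := integral_mono hc (x1.add y1) fun p => cost_le p.1 p.2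
      rw [integral_add' x1 y1, x2, y2] at this
      exact this
    have := abs_nonneg C0
    nlinarith
  · obtain ⟨hf, hg⟩ := pot_int hε h hμ hν
    obtain ⟨f1, f2⟩ := map_int measurable_fst h1 hf
    obtain ⟨g1, g2⟩ := map_int measurable_snd h2 hg
    have hup := upper_bound hμ hν hφ₀ hφi hε hε1 h
    have ht := (((f1.add g1).sub hc).div_const ε)
    have hte : ∫ p, (f p.1 + g p.2 - ‖p.1 - p.2‖ ^ 2 / 2) / ε ∂Γ =
        (∫ x, f x ∂μ + ∫ x, g x ∂ν - ∫ p, ‖p.1 - p.2‖ ^ 2 / 2 ∂Γ) / ε := by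
      have hB := integral_sub' (f1.add g1) hc
      rw [integral_add' f1 g1, f2, g2] at hB
      rw [integral_div, ← hB]
      rfl
    have hsi : Integrable (fun p => ‖p.1 + p.2‖ ^ 2) Γ := by
      refine ((x1.add y1).const_mul 2).mono' (by fun_prop) (Filter.Eventually.of_forall fun p => ?_)
      rw [Real.norm_of_nonneg (by positivity)]
      have := norm_add_le p.1 p.2
      simp only [Pi.add_apply]
      nlinarith [norm_nonneg (p.1 + p.2), sq_nonneg (‖p.1‖ - ‖p.2‖), norm_nonneg p.1, norm_nonneg p.2]
    have hs : ∫ p, ‖p.1 + p.2‖ ^ 2 ∂Γ ≤ 2 * m := by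
      have e := integral_mono hsi ((x1.add y1).const_mul 2) fun p => by
        have := norm_add_le p.1 p.2
        simp only [Pi.add_apply]
        nlinarith [norm_nonneg (p.1 + p.2), sq_nonneg (‖p.1‖ - ‖p.2‖), norm_nonneg p.1, norm_nonneg p.2]
      rw [integral_const_mul, integral_add' x1 y1, x2, y2] at e
      exact e
    have hl1 := (integrable_const (μ := Γ) (-(d / 2) * Real.log (2 * π * ε))).sub hsi
    have hl := hl1.sub (hDi.div_const (2 * ε))
    have hle := integral_sub' hl1 (hDi.div_const (2 * ε))
    rw [integral_sub' (integrable_const _) hsi, integral_div] at hle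
    simp only [integral_const, probReal_univ, one_smul] at hle
    have hlm : Measurable (fun p : EuclideanSpace ℝ (Fin d) × EuclideanSpace ℝ (Fin d) =>
      -(d / 2) * Real.log (2 * π * ε) - ‖p.1 + p.2‖ ^ 2 - ‖p.1 - M (p.1 + p.2)‖ ^ 2 / (2 * ε)) := by
      have := hM.measurable
      fun_prop
    have hlow := ent_lower hμac hνac hμent hνent (dens_meas h) hlm hΓ h1 h2 ht hl hA0 (gauss_test hM hε)
    rw [hte] at hlow
    have hle' : ∫ p, (-(d / 2) * Real.log (2 * π * ε) - ‖p.1 + p.2‖ ^ 2 - ‖p.1 - M (p.1 + p.2)‖ ^ 2 / (2 * ε)) ∂Γ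
      = _ := hle
    rw [hle', Real.log_mul (by positivity) hε.ne', add_assoc, ← hH] at hlow
    have h3 := mul_le_mul_of_nonneg_left hlow hε.le
    rw [← hc0, ← hU, ← hA] at hup
    set I := ∫ p, ‖p.1 - M (p.1 + p.2)‖ ^ 2 ∂Γ
    set cG := ∫ p, ‖p.1 - p.2‖ ^ 2 / 2 ∂Γ
    set J := ∫ x, f x ∂μ + ∫ x, g x ∂ν
    set S := ∫ p, ‖p.1 + p.2‖ ^ 2 ∂Γ
    have e0 : ε * ((J - cG) / ε + H) = J - cG + ε * H := by field_simp
    have e1 : ε * (I / (2 * ε)) = I / 2 := by field_simp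
    have e2 : ε * S ≤ ε * (2 * m) := mul_le_mul_of_nonneg_left hs hε.le
    have e5 : ε * (-(d / 2) * (Real.log (2 * π) + Real.log ε) - S - I / (2 * ε) + 1 - A) =
        ε * (-(d / 2) * (Real.log (2 * π) + Real.log ε) - S + 1 - A) - I / 2 := by
      rw [← e1]; ring
    rw [e0, e5] at h3
    have e3 : (cG - c0) / 2 ≤ ε * C0 := by
      rw [hC0]
      linarith
    have e4 : ε * C0 ≤ ε * |C0| := mul_le_mul_of_nonneg_left (le_abs_self _) hε.le
    have : 0 ≤ m * ε := by positivity
    linarith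
end

section
/- Let M be a real symmetric positive definite d×d matrix. Then for every ε > 0, ‖(M + (ε²/4) I_d)^{1/2} − M^{1/2}‖_op ≤ (ε²/8) ‖M^{−1}‖_op^{1/2} + (ε⁴/32) ‖M^{−1}‖_op^{3/2}. -/
open Matrix

/-- The operator norm of a square matrix with respect to the Euclidean norm on `ℝ^d`. -/
noncomputable def matOpNorm {d : ℕ} (M : Matrix (Fin d) (Fin d) ℝ) : ℝ :=
  ‖(Matrix.toEuclideanCLM (𝕜 := ℝ) M :
      EuclideanSpace ℝ (Fin d) →L[ℝ] EuclideanSpace ℝ (Fin d))‖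

open scoped Matrix.Norms.L2Operator in
lemma opNorm_le_of_eigen {d : ℕ} (D : Matrix (Fin d) (Fin d) ℝ) (hD : D.IsHermitian)
    (K : ℝ) (hK : 0 ≤ K)
    (h : ∀ (l : ℝ) (x : EuclideanSpace ℝ (Fin d)), ‖x‖ = 1 → D *ᵥ x.ofLp = l • x.ofLp → |l| ≤ K) :
    matOpNorm D ≤ K := by
  have h1 : matOpNorm D = ‖D‖ := rfl
  have h2 := hD.conjStarAlgAut_star_eigenvectorUnitary
  have h3 : ‖D‖ = ‖(diagonal (RCLike.ofReal ∘ hD.eigenvalues) : Matrix (Fin d) (Fin d) ℝ)‖ := by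
    rw [← h2, Unitary.conjStarAlgAut_apply, CStarRing.norm_mul_mem_unitary, 
      CStarRing.norm_coe_unitary_mul]
    exact (star (star hD.eigenvectorUnitary)).2
  rw [h1, h3, l2_opNorm_diagonal, pi_norm_le_iff_of_nonneg hK]
  intro i
  exact h _ (hD.eigenvectorBasis i) (hD.eigenvectorBasis.orthonormal.1 i)
    (hD.mulVec_eigenvectorBasis i)

open scoped Matrix.Norms.L2Operator in
lemma matOpNorm_sq {d : ℕ} (D : Matrix (Fin d) (Fin d) ℝ) (hD : D.IsHermitian) :
    matOpNorm (D * D) = matOpNorm D ^ 2 := by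
  have := l2_opNorm_conjTranspose_mul_self D
  rw [hD.eq] at this
  rw [sq]
  exact this

lemma dot_symm {d : ℕ} (A : Matrix (Fin d) (Fin d) ℝ) (hA : A.IsHermitian) (x y : Fin d → ℝ) :
    x ⬝ᵥ A *ᵥ y = A *ᵥ x ⬝ᵥ y := by
  have h : Aᵀ = A := by simpa [Matrix.IsHermitian] using hA
  rw [dotProduct_mulVec, ← mulVec_transpose, h]

lemma dot_le {d : ℕ} (A : Matrix (Fin d) (Fin d) ℝ) (x : EuclideanSpace ℝ (Fin d))
    (hx : ‖x‖ = 1) : x.ofLp ⬝ᵥ A *ᵥ x.ofLp ≤ matOpNorm A := by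
  rw [← inner_toEuclideanCLM]
  refine (real_inner_le_norm _ _).trans ?_
  have := (toEuclideanCLM (𝕜 := ℝ) A).le_opNorm x
  rw [hx, mul_one] at this
  rw [hx, one_mul]
  exact this

/-- `‖(M + (ε²/4) I)^{1/2} − M^{1/2}‖_op ≤ (ε²/8)‖M⁻¹‖_op^{1/2} + (ε⁴/32)‖M⁻¹‖_op^{3/2}`
for a symmetric positive definite matrix `M`; the square roots are characterized as the unique
symmetric positive definite matrices squaring to `M + (ε²/4) I` and `M` respectively. -/
theorem sqrt_perturbation_opNorm_bound {d : ℕ}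
    (M : Matrix (Fin d) (Fin d) ℝ) (hM : M.PosDef) (ε : ℝ) (hε : 0 < ε)
    (sM : Matrix (Fin d) (Fin d) ℝ) (hsM : sM.PosDef) (hsM2 : sM * sM = M)
    (sMε : Matrix (Fin d) (Fin d) ℝ) (hsMε : sMε.PosDef)
    (hsMε2 : sMε * sMε = M + (ε ^ 2 / 4) • (1 : Matrix (Fin d) (Fin d) ℝ)) :
    matOpNorm (sMε - sM) ≤
      ε ^ 2 / 8 * matOpNorm M⁻¹ ^ ((1 : ℝ) / 2) +
      ε ^ 4 / 32 * matOpNorm M⁻¹ ^ ((3 : ℝ) / 2) := by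
  have hu : IsUnit sM.det := (Matrix.isUnit_iff_isUnit_det _).1 hsM.isUnit
  have hAH := hsM.isHermitian
  have hBH := hsMε.isHermitian
  set n := matOpNorm sM⁻¹ with hn
  have hn0 : 0 ≤ n := norm_nonneg _
  have hMn : matOpNorm M⁻¹ = n ^ 2 := by
    rw [← hsM2, Matrix.mul_inv_rev, matOpNorm_sq _ hAH.inv]
  have hhalf : matOpNorm M⁻¹ ^ ((1 : ℝ) / 2) = n := by
    rw [hMn, ← Real.sqrt_eq_rpow, Real.sqrt_sq hn0]
  have h32 : 0 ≤ ε ^ 4 / 32 * matOpNorm M⁻¹ ^ ((3 : ℝ) / 2) := by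
    have : 0 ≤ matOpNorm M⁻¹ := norm_nonneg _
    positivity
  rw [hhalf]
  suffices h : matOpNorm (sMε - sM) ≤ ε ^ 2 / 8 * n by linarith
  refine opNorm_le_of_eigen _ (hBH.sub hAH) _ (by positivity) ?_
  intro l x hx hl
  have hxx : x.ofLp ⬝ᵥ x.ofLp = 1 := by
    have := real_inner_self_eq_norm_sq x
    rw [EuclideanSpace.inner_eq_star_dotProduct, hx] at this
    simpa using this
  have hxne : x.ofLp ≠ 0 := by
    intro h
    simp [h] at hxx
  have hqA : 0 < x.ofLp ⬝ᵥ sM *ᵥ x.ofLp := by simpa using hsM.dotProduct_mulVec_pos hxne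
  have hqB : 0 < x.ofLp ⬝ᵥ sMε *ᵥ x.ofLp := by simpa using hsMε.dotProduct_mulVec_pos hxne
  have hinv : sM *ᵥ (sM⁻¹ *ᵥ x.ofLp) = x.ofLp := by
    rw [mulVec_mulVec, Matrix.mul_nonsing_inv _ hu, one_mulVec]
  have hle := dot_le sM⁻¹ x hx
  -- the quadratic form of `sM` is bounded below
  have hlow : ∀ t : ℝ, 0 ≤ x.ofLp ⬝ᵥ sM *ᵥ x.ofLp - 2 * t + t ^ 2 * n := by
    intro t
    have h0 : 0 ≤ (x.ofLp - t • sM⁻¹ *ᵥ x.ofLp) ⬝ᵥ sM *ᵥ (x.ofLp - t • sM⁻¹ *ᵥ x.ofLp) := by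
      simpa using hsM.posSemidef.dotProduct_mulVec_nonneg (x.ofLp - t • sM⁻¹ *ᵥ x.ofLp)
    have h1 : (sM⁻¹ *ᵥ x.ofLp) ⬝ᵥ sM *ᵥ x.ofLp = 1 := by
      rw [dot_symm _ hAH, hinv, hxx]
    rw [mulVec_sub, mulVec_smul, hinv] at h0
    simp only [sub_dotProduct, dotProduct_sub, smul_dotProduct, dotProduct_smul, smul_eq_mul,
      h1, hxx] at h0
    rw [dotProduct_comm (sM⁻¹ *ᵥ x.ofLp) x.ofLp] at h0
    nlinarith [mul_le_mul_of_nonneg_left hle (sq_nonneg t)]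
  have hBx : sMε *ᵥ x.ofLp = sM *ᵥ x.ofLp + l • x.ofLp := by
    rw [← hl, sub_mulVec]; abel
  have hBA : x.ofLp ⬝ᵥ sMε *ᵥ x.ofLp = x.ofLp ⬝ᵥ sM *ᵥ x.ofLp + l := by
    rw [hBx, dotProduct_add, dotProduct_smul, hxx]; simp
  have hsq : l * (2 * (x.ofLp ⬝ᵥ sM *ᵥ x.ofLp) + l) = ε ^ 2 / 4 := by
    have h1 : x.ofLp ⬝ᵥ (sMε * sMε) *ᵥ x.ofLp
        = x.ofLp ⬝ᵥ (sM * sM) *ᵥ x.ofLp + ε ^ 2 / 4 := by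
      rw [hsMε2, hsM2, add_mulVec, dotProduct_add, smul_mulVec, one_mulVec, dotProduct_smul, hxx]
      simp
    rw [← mulVec_mulVec, ← mulVec_mulVec, dot_symm _ hBH, dot_symm _ hAH, hBx] at h1
    simp only [add_dotProduct, dotProduct_add, smul_dotProduct, dotProduct_smul, smul_eq_mul,
      hxx] at h1
    rw [dotProduct_comm (sM *ᵥ x.ofLp) x.ofLp] at h1
    linarith
  generalize x.ofLp ⬝ᵥ sM *ᵥ x.ofLp = q at *
  have hlpos : 0 < l := by
    have : 0 < ε ^ 2 / 4 := by positivity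
    by_contra hneg
    nlinarith
  have hqn : 1 ≤ q * n := by
    have := hlow q
    nlinarith
  rw [abs_of_pos hlpos]
  nlinarith [mul_le_mul_of_nonneg_left hqn hlpos.le, mul_nonneg (sq_nonneg l) hn0]
end
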